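/- arXiv:2402.01436 — 2 statements merged into one kernel-verified Lean document; each statement's English description precedes it below -/
import Mathlib

section
/- For a weakly decreasing sequence of nonnegative integers λ_1 ≥ λ_2 ≥ ... ≥ λ_n ≥ 0, the product over 1 ≤ i < j ≤ n of (λ_i - λ_j + j - i)/(j - i) equals the determinant of the n×n matrix whose (i,j)-entry is the binomial coefficient C(λ_i + n - i, n - j). -/
lemma aux_choose_det (n : ℕ) (w : Fin n → ℕ) :
    Matrix.det (Matrix.of fun i j : Fin n => ((w i).choose (n - 1 - (j : ℕ)) : ℚ)) *
      ∏ j : Fin n, ((j : ℕ).factorial : ℚ) =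
    ∏ i : Fin n, ∏ j ∈ Finset.Ioi i, ((w i : ℚ) - (w j : ℚ)) := by
  have h1 := Matrix.det_eval_matrixOfPolynomials_eq_det_vandermonde (fun i => (w i : ℚ))
    (fun j : Fin n => descPochhammer ℚ j) (fun i => descPochhammer_natDegree ℚ i)
    (fun i => monic_descPochhammer ℚ i)
  have h2 : (Matrix.of fun i j : Fin n => (descPochhammer ℚ (j : ℕ)).eval (w i : ℚ)) =
      Matrix.of fun i j : Fin n => ((j : ℕ).factorial : ℚ) *
        (Matrix.of fun i j : Fin n => ((w i).choose (j : ℕ) : ℚ)) i j := by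
    ext i j
    simp only [Matrix.of_apply]
    rw [descPochhammer_eval_eq_descFactorial, Nat.descFactorial_eq_factorial_mul_choose]
    push_cast
    rfl
  rw [h2, Matrix.det_mul_row] at h1
  have h3 : (Matrix.of fun i j : Fin n => ((w i).choose (n - 1 - (j : ℕ)) : ℚ)) =
      (Matrix.of fun i j : Fin n => ((w i).choose (j : ℕ) : ℚ)).submatrix id Fin.revPerm := by
    ext i j
    simp only [Matrix.of_apply, Matrix.submatrix_apply, id, Fin.revPerm_apply, Fin.val_rev]
    congr 2
    omega
  have h4 := Matrix.det_projVandermonde (fun _ : Fin n => (1 : ℚ)) (fun i => (w i : ℚ))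
  have h5 : Matrix.projVandermonde (fun _ : Fin n => (1 : ℚ)) (fun i => (w i : ℚ)) =
      (Matrix.vandermonde (fun i => (w i : ℚ))).submatrix id Fin.revPerm := by
    ext i j
    simp [Matrix.projVandermonde_apply, Matrix.vandermonde_apply]
  simp only [one_mul] at h4
  rw [← h4, h5, h3, Matrix.det_permute', Matrix.det_permute', h1]
  ring

theorem weyl_dim_gl_det (n : ℕ) (lam : Fin n → ℕ)
    (hdec : ∀ i j : Fin n, i ≤ j → lam j ≤ lam i) :
    (∏ i : Fin n, ∏ j ∈ Finset.Ioi i,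
        (((lam i : ℚ) - (lam j : ℚ) + (j : ℕ) - (i : ℕ)) / (((j : ℕ) : ℚ) - ((i : ℕ) : ℚ)))) =
    Matrix.det (Matrix.of fun i j : Fin n =>
      ((lam i + n - 1 - (i : ℕ)).choose (n - 1 - (j : ℕ)) : ℚ)) := by
  have key := aux_choose_det n (fun i => lam i + n - 1 - (i : ℕ))
  have key0 := aux_choose_det n (fun i => n - 1 - (i : ℕ))
  have hd : Matrix.det (Matrix.of fun i j : Fin n =>
      ((n - 1 - (i : ℕ)).choose (n - 1 - (j : ℕ)) : ℚ)) = 1 := by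
    rw [Matrix.det_of_upperTriangular]
    · simp
    · intro i j hij
      have hij' : (j : ℕ) < (i : ℕ) := hij
      have := i.isLt
      simp only [Matrix.of_apply]
      rw [Nat.choose_eq_zero_of_lt (by omega), Nat.cast_zero]
  rw [hd, one_mul] at key0
  have hne : (∏ j : Fin n, ((j : ℕ).factorial : ℚ)) ≠ 0 :=
    Finset.prod_ne_zero_iff.mpr fun j _ => by exact_mod_cast Nat.factorial_ne_zero _
  have hc : ∀ (m : ℕ) (i : Fin n), ((m + n - 1 - (i : ℕ) : ℕ) : ℚ) = m + n - 1 - (i : ℕ) := by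
    intro m i
    have := i.isLt
    have h : ((m + n - 1 - (i : ℕ) : ℕ) : ℚ) + 1 + (i : ℕ) = m + n := by
      exact_mod_cast (by omega : (m + n - 1 - (i : ℕ)) + 1 + (i : ℕ) = m + n)
    linarith
  have hnum : (∏ i : Fin n, ∏ j ∈ Finset.Ioi i,
      ((lam i : ℚ) - (lam j : ℚ) + (j : ℕ) - (i : ℕ))) =
      ∏ i : Fin n, ∏ j ∈ Finset.Ioi i,
        (((lam i + n - 1 - (i : ℕ) : ℕ) : ℚ) - ((lam j + n - 1 - (j : ℕ) : ℕ) : ℚ)) := by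
    refine Finset.prod_congr rfl fun i _ => Finset.prod_congr rfl fun j _ => ?_
    rw [hc, hc]
    ring
  have hden : (∏ i : Fin n, ∏ j ∈ Finset.Ioi i, (((j : ℕ) : ℚ) - ((i : ℕ) : ℚ))) =
      ∏ i : Fin n, ∏ j ∈ Finset.Ioi i,
        (((n - 1 - (i : ℕ) : ℕ) : ℚ) - ((n - 1 - (j : ℕ) : ℕ) : ℚ)) := by
    refine Finset.prod_congr rfl fun i _ => Finset.prod_congr rfl fun j _ => ?_
    have hi := hc 0 i
    have hj := hc 0 j
    simp only [zero_add, Nat.cast_zero] at hi hj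
    rw [hi, hj]
    ring
  simp only [Finset.prod_div_distrib]
  rw [hnum, hden, ← key0, ← key]
  exact mul_div_cancel_right₀ _ hne
end

section
/- Let λ_1 ≥ ... ≥ λ_n ≥ 0 and μ_1 ≥ ... ≥ μ_m ≥ 0 be integers with m ≤ n - 1, and set λ_{n+i} = 0 and μ_{m+i} = 0 for i ≥ 1, u_{ij} = λ_i - μ_j + j - i. Define the n×n matrix M by M_{ij} = {u_{ij} + n - m - 1 choose n - m - 1} if u_{ij} ≥ 0 and 1 ≤ j ≤ m (and 0 if u_{ij} < 0), and M_{ij} = C(u_{ij} + n - j, n - j) for m+1 ≤ j ≤ n. Then det(M) is nonzero if and only if λ_i ≥ μ_i ≥ λ_{i+n-m} for all 1 ≤ i ≤ m. -/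
/-- Generalized binomial coefficient `C(x,k) = x(x-1)⋯(x-k+1)/k!`. -/
def gchoose (x : ℚ) (k : ℕ) : ℚ :=
  (∏ i ∈ Finset.range k, (x - i)) / (Nat.factorial k)

/-- `u lam mu i j = λ_i - μ_j + j - i` (with 1-based indices `i, j`). -/
def uent (lam mu : ℕ → ℤ) (i j : ℕ) : ℤ := lam i - mu j + (j : ℤ) - (i : ℤ)

theorem gchoose_succ_aux (x : ℚ) (k : ℕ) :
    gchoose x (k + 1) = gchoose x k * (x - k) / (k + 1) := by
  unfold gchoose
  rw [Finset.prod_range_succ, Nat.factorial_succ]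
  push_cast
  have h1 : ((k : ℚ) + 1) ≠ 0 := by positivity
  have h2 : ((Nat.factorial k : ℕ) : ℚ) ≠ 0 := by positivity
  field_simp

theorem gchoose_zero_aux (x : ℚ) : gchoose x 0 = 1 := by simp [gchoose]

theorem gchoose_pascal (x : ℚ) (k : ℕ) :
    gchoose (x + 1) (k + 1) - gchoose x (k + 1) = gchoose x k := by
  induction k with
  | zero => simp [gchoose_succ_aux, gchoose_zero_aux]
  | succ k ih =>
    have h : gchoose (x + 1) (k + 1) = gchoose x (k + 1) + gchoose x k := by linarith
    rw [gchoose_succ_aux (x + 1) (k + 1), h, gchoose_succ_aux x (k + 1), gchoose_succ_aux x k]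
    push_cast
    have h1 : ((k : ℚ) + 1) ≠ 0 := by positivity
    have h2 : ((k : ℚ) + 1 + 1) ≠ 0 := by positivity
    field_simp
    ring

/-- Discrete truncated powers. -/
def ftr : ℕ → ℤ → ℚ
  | 0, d => if d = 0 then 1 else 0
  | (k + 1), d => if 1 ≤ d then (((d - 1).toNat.choose k : ℕ) : ℚ) else 0

theorem ftr_diff (k : ℕ) (d : ℤ) : ftr (k + 1) (d + 1) - ftr (k + 1) d = ftr k d := by
  rcases lt_trichotomy d 0 with h | h | h
  · have h1 : ¬ (1 ≤ d + 1) := by omega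
    have h2 : ¬ (1 ≤ d) := by omega
    have h3 : d ≠ 0 := by omega
    cases k <;> simp [ftr, h1, h2, h3]
  · subst h
    cases k <;> simp [ftr]
  · obtain ⟨e, rfl⟩ : ∃ e : ℕ, d = e + 1 := ⟨(d - 1).toNat, by omega⟩
    have h1 : (1 : ℤ) ≤ (e : ℤ) + 1 + 1 := by omega
    have h2 : (1 : ℤ) ≤ (e : ℤ) + 1 := by omega
    have h3 : ((e : ℤ) + 1) ≠ 0 := by omega
    have h4 : ((e : ℤ) + 1).toNat = e + 1 := by omega
    cases k with
    | zero => simp only [ftr, h1, h2, h3, if_true, if_false]; simp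
    | succ k =>
      simp only [ftr, h1, h2, if_true, add_sub_cancel_right, h4, Int.toNat_natCast,
        Nat.choose_succ_succ]
      push_cast; ring

/-- Entry of the discrete spline collocation matrix. -/
def ent (k : ℕ) (K : ℕ → ℤ) (x : ℤ) (j : ℕ) : ℚ :=
  if j < k then gchoose (x : ℚ) j else ftr k (x - K (j - k))

theorem ent_diff (k : ℕ) (K : ℕ → ℤ) (x : ℤ) (j : ℕ) :
    ent (k + 1) K (x + 1) (j + 1) - ent (k + 1) K x (j + 1) = ent k K x j := by
  unfold ent
  by_cases h : j < k
  · simp only [h, add_lt_add_iff_right, if_true]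
    push_cast
    exact gchoose_pascal _ _
  · simp only [h, add_lt_add_iff_right, if_false, Nat.add_sub_add_right]
    rw [← ftr_diff k (x - K (j - k))]
    congr 2
    ring

theorem tele (F G : ℤ → ℚ) (h : ∀ x, F (x + 1) - F x = G x) (a : ℤ) (t : ℕ) :
    F (a + t) - F a = ∑ x ∈ Finset.Ico a (a + t), G x := by
  induction t with
  | zero => simp
  | succ t ih =>
    have : Finset.Ico a (a + ((t + 1 : ℕ) : ℤ)) = insert (a + t) (Finset.Ico a (a + t)) := by
      ext y; simp only [Finset.mem_Ico, Finset.mem_insert]; push_cast; omega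
    rw [this, Finset.sum_insert (by simp), ← ih, ← h]
    push_cast
    rw [add_assoc]
    ring

theorem ent_tele (k : ℕ) (K : ℕ → ℤ) (a b : ℤ) (hab : a ≤ b) (j : ℕ) :
    ent (k + 1) K b (j + 1) - ent (k + 1) K a (j + 1) = ∑ x ∈ Finset.Ico a b, ent k K x j := by
  obtain ⟨t, rfl⟩ : ∃ t : ℕ, b = a + t := ⟨(b - a).toNat, by omega⟩
  exact tele (fun x => ent (k + 1) K x (j + 1)) _ (fun x => ent_diff k K x j) a t

theorem det_step (n k : ℕ) (K : ℕ → ℤ) (l : Fin (n + 1) → ℤ) (hl : StrictMono l) :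
    Matrix.det (Matrix.of fun i j : Fin (n + 1) => ent (k + 1) K (l i) j) =
    ∑ x ∈ Fintype.piFinset (fun i : Fin n => Finset.Ico (l i.castSucc) (l i.succ)),
      Matrix.det (Matrix.of fun i j : Fin n => ent k K (x i) j) := by
  let B : Matrix (Fin (n + 1)) (Fin (n + 1)) ℚ := Matrix.of fun i j =>
    Fin.cases (ent (k + 1) K (l 0) j)
      (fun i' : Fin n => ent (k + 1) K (l i'.succ) j - ent (k + 1) K (l i'.castSucc) j) i
  have hB : Matrix.det (Matrix.of fun i j : Fin (n + 1) => ent (k + 1) K (l i) j) = B.det := by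
    apply Matrix.det_eq_of_forall_row_eq_smul_add_pred (fun _ => 1)
    · intro j; simp [B]
    · intro i j; simp [B]
  rw [hB, Matrix.det_succ_column_zero, Fin.sum_univ_succ]
  have h0 : ∀ x, ent (k + 1) K x 0 = 1 := by intro x; simp [ent, gchoose_zero_aux]
  have hz : ∀ i : Fin n, B i.succ 0 = 0 := by intro i; simp [B, h0]
  have h1 : B 0 0 = 1 := by simp [B, h0]
  simp only [hz, h1, mul_zero, zero_mul, Finset.sum_const_zero, add_zero, Fin.val_zero, pow_zero,
    one_mul]
  have hs : B.submatrix (Fin.succAbove 0) Fin.succ =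
      fun i : Fin n => ∑ x ∈ Finset.Ico (l i.castSucc) (l i.succ), fun j : Fin n => ent k K x j := by
    funext i j
    simp only [Matrix.submatrix_apply, Fin.succAbove_zero, Finset.sum_apply]
    rw [← ent_tele k K _ _ (hl Fin.castSucc_lt_succ).le]
    simp [B]
  rw [hs]
  exact (Matrix.detRowAlternating (R := ℚ) (n := Fin n)).toMultilinearMap.map_sum_finset
    (fun _ x j => ent k K x j) (fun i : Fin n => Finset.Ico (l i.castSucc) (l i.succ))

theorem det_base (n : ℕ) (K : ℕ → ℤ) (l : Fin n → ℤ) (hl : StrictMono l)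
    (hK : ∀ i j, i < j → j < n → K i < K j) :
    Matrix.det (Matrix.of fun i j : Fin n => ent 0 K (l i) j) =
      if ∀ i : Fin n, l i = K i then 1 else 0 := by
  have he : ∀ i j : Fin n, ent 0 K (l i) j = if l i = K j then 1 else 0 := by
    intro i j; simp [ent, ftr, sub_eq_zero]
  have hK' : StrictMono (fun i : Fin n => K i) := fun i j h => hK i j h j.2
  split_ifs with h
  · rw [← Matrix.det_one (n := Fin n)]
    congr 1
    ext i j
    rw [Matrix.of_apply, he, h, Matrix.one_apply]
    have : (K i = K j) ↔ i = j := hK'.injective.eq_iff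
    simp only [this]
  · by_contra hd
    apply h
    have hex : ∀ i : Fin n, ∃ j : Fin n, l i = K j := by
      intro i
      by_contra hno
      push Not at hno
      apply hd
      apply Matrix.det_eq_zero_of_row_eq_zero i
      intro j
      simp [he, hno j]
    choose s hs using hex
    have hsm : StrictMono s := by
      intro a b hab
      have := hl hab
      rw [hs, hs] at this
      exact hK'.lt_iff_lt.1 this
    have : s = id := by
      have hsurj := Finite.injective_iff_surjective.1 hsm.injective
      exact hsm.range_inj strictMono_id |>.1 (by rw [Set.range_id, hsurj.range_eq])
    intro i
    rw [hs, this]; rfl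

theorem det_main (k : ℕ) : ∀ (n : ℕ) (K : ℕ → ℤ) (l : Fin n → ℤ), k ≤ n → StrictMono l →
    (∀ i j, i < j → j + k < n → K i < K j) →
    0 ≤ Matrix.det (Matrix.of fun i j : Fin n => ent k K (l i) j) ∧
    (Matrix.det (Matrix.of fun i j : Fin n => ent k K (l i) j) ≠ 0 ↔
      ∀ i (h : i + k < n), l ⟨i, by omega⟩ ≤ K i ∧ K i + k ≤ l ⟨i + k, h⟩) := by
  induction k with
  | zero =>
    intro n K l _ hl hK
    rw [det_base n K l hl hK]
    split_ifs with h
    · refine ⟨zero_le_one, ?_⟩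
      simp only [ne_eq, one_ne_zero, not_false_eq_true, true_iff]
      intro i hi
      have := h ⟨i, hi⟩
      simp at this
      simp [this]
    · refine ⟨le_rfl, ?_⟩
      simp only [ne_eq, not_true_eq_false, false_iff]
      intro hh
      apply h
      intro i
      have := hh i i.2
      simp at this
      omega
  | succ k ih =>
    intro n K l hkn hl hK
    obtain ⟨n, rfl⟩ : ∃ n', n = n' + 1 := ⟨n - 1, by omega⟩
    rw [det_step n k K l hl]
    have hK' : ∀ i j, i < j → j + k < n → K i < K j := fun i j h h' => hK i j h (by omega)
    have hx : ∀ x ∈ Fintype.piFinset (fun i : Fin n => Finset.Ico (l i.castSucc) (l i.succ)),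
        StrictMono x := by
      intro x hx a b hab
      rw [Fintype.mem_piFinset] at hx
      have h1 := Finset.mem_Ico.1 (hx a)
      have h2 := Finset.mem_Ico.1 (hx b)
      have h3 : l a.succ ≤ l b.castSucc := hl.monotone (by
        rw [Fin.le_def]; simp only [Fin.val_succ, Fin.val_castSucc]; exact hab)
      omega
    have hnn : ∀ x ∈ Fintype.piFinset (fun i : Fin n => Finset.Ico (l i.castSucc) (l i.succ)),
        0 ≤ Matrix.det (Matrix.of fun i j : Fin n => ent k K (x i) j) :=
      fun x h => (ih n K x (by omega) (hx x h) hK').1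
    refine ⟨Finset.sum_nonneg hnn, ?_⟩
    rw [ne_eq, Finset.sum_eq_zero_iff_of_nonneg hnn]
    push Not
    constructor
    · rintro ⟨x, hxm, hdet⟩ i hi
      have hc := (ih n K x (by omega) (hx x hxm) hK').2.1 hdet i (by omega)
      rw [Fintype.mem_piFinset] at hxm
      have h1 := Finset.mem_Ico.1 (hxm ⟨i, by omega⟩)
      have h2 := Finset.mem_Ico.1 (hxm ⟨i + k, by omega⟩)
      simp only [Fin.castSucc_mk, Fin.succ_mk] at h1 h2
      have h3 : l ⟨i + (k + 1), hi⟩ = l ⟨i + k + 1, by omega⟩ := rfl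
      rw [h3]
      push_cast
      omega
    · intro hc
      -- K gap
      have hgap : ∀ t i, i + t + (k + 1) < n + 1 → K i + t ≤ K (i + t) := by
        intro t
        induction t with
        | zero => intro i _; simp
        | succ t iht =>
          intro i hi
          have h1 := iht i (by omega)
          have h2 := hK (i + t) (i + (t + 1)) (by omega) (by omega)
          push_cast
          omega
      let x : Fin n → ℤ := fun i =>
        if i.1 + k < n then min (l i.succ - 1) (K i) else l i.succ - 1
      have hxm : x ∈ Fintype.piFinset
          (fun i : Fin n => Finset.Ico (l i.castSucc) (l i.succ)) := by
        rw [Fintype.mem_piFinset]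
        intro i
        rw [Finset.mem_Ico]
        have h1 : l i.castSucc < l i.succ := hl Fin.castSucc_lt_succ
        simp only [x]
        split_ifs with hi
        · have h2 := (hc i.1 (by omega)).1
          have h3 : l ⟨i.1, by omega⟩ = l i.castSucc := rfl
          rw [h3] at h2
          omega
        · omega
      refine ⟨x, hxm, ?_⟩
      rw [(ih n K x (by omega) (hx x hxm) hK').2]
      intro i hi
      have h1 := hc i (by omega)
      have h3 : l ⟨i + (k + 1), by omega⟩ = l (Fin.succ ⟨i + k, hi⟩) := rfl
      rw [h3] at h1
      push_cast at h1
      constructor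
      · simp only [x, hi, if_true]
        omega
      · simp only [x]
        split_ifs with h5
        · have := hgap k i (by omega)
          omega
        · omega

/-- Interlacing criterion for the nonvanishing of the branching determinant for
`GL(m) ⊂ GL(n)`. -/
theorem gl_branching_det_ne_zero_iff (n m : ℕ) (hm : m < n) (lam mu : ℕ → ℤ)
    (hlam_dec : ∀ i, 1 ≤ i → i < n → lam (i + 1) ≤ lam i)
    (hlam_nonneg : 0 ≤ lam n)
    (hlam_zero : ∀ i, n < i → lam i = 0)
    (hmu_dec : ∀ i, 1 ≤ i → i < m → mu (i + 1) ≤ mu i)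
    (hmu_nonneg : 0 ≤ mu m)
    (hmu_zero : ∀ i, m < i → mu i = 0) :
    Matrix.det (Matrix.of fun i j : Fin n =>
        if (j : ℕ) + 1 ≤ m then
          (if 0 ≤ uent lam mu ((i : ℕ) + 1) ((j : ℕ) + 1) then
            (((uent lam mu ((i : ℕ) + 1) ((j : ℕ) + 1)).toNat + (n - m - 1)).choose
              (n - m - 1) : ℚ)
          else 0)
        else
          gchoose (((uent lam mu ((i : ℕ) + 1) ((j : ℕ) + 1) : ℤ) : ℚ) +
            ((n - 1 - (j : ℕ) : ℕ) : ℚ)) (n - 1 - (j : ℕ))) ≠ 0 ↔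
    ∀ i, 1 ≤ i → i ≤ m → mu i ≤ lam i ∧ lam (i + n - m) ≤ mu i := by
  classical
  have hmu_mono : ∀ t i, 1 ≤ i → i + t ≤ m → mu (i + t) ≤ mu i := by
    intro t
    induction t with
    | zero => intro i _ _; simp
    | succ t ih =>
      intro i h1 h2
      have := ih i h1 (by omega)
      have := hmu_dec (i + t) (by omega) (by omega)
      rw [← add_assoc]; omega
  have hlam_mono : ∀ t i, 1 ≤ i → i + t ≤ n → lam (i + t) ≤ lam i := by
    intro t
    induction t with
    | zero => intro i _ _; simp
    | succ t ih =>
      intro i h1 h2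
      have := ih i h1 (by omega)
      have := hlam_dec (i + t) (by omega) (by omega)
      rw [← add_assoc]; omega
  obtain ⟨k, rfl⟩ : ∃ k, n = m + (k + 1) := ⟨n - m - 1, by omega⟩
  let K : ℕ → ℤ := fun j => mu (m - j) + j
  let l : Fin (m + (k + 1)) → ℤ := fun i => lam (m + (k + 1) - i) + (i : ℕ)
  have hl : StrictMono l := by
    intro a b hab
    have hab' : a.1 < b.1 := hab
    have := hlam_mono (b.1 - a.1) (m + (k + 1) - b) (by omega) (by omega)
    rw [show m + (k + 1) - b.1 + (b.1 - a.1) = m + (k + 1) - a.1 by omega] at this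
    simp only [l]
    omega
  have hK : ∀ i j, i < j → j + (k + 1) < m + (k + 1) → K i < K j := by
    intro i j hij hj
    have := hmu_mono (j - i) (m - j) (by omega) (by omega)
    rw [show m - j + (j - i) = m - i by omega] at this
    simp only [K]
    omega
  have key := (det_main (k + 1) (m + (k + 1)) K l (by omega) hl hK).2
  rw [← Matrix.det_submatrix_equiv_self (Fin.revPerm)]
  have hM : ∀ A B : Matrix (Fin (m + (k + 1))) (Fin (m + (k + 1))) ℚ, A = B →
      (A.det ≠ 0 ↔ B.det ≠ 0) := by rintro A _ rfl; rfl
  rw [hM _ (Matrix.of fun i j => ent (k + 1) K (l i) j) ?_, key]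
  · constructor
    · intro h i h1 h2
      have := h (m - i) (by omega)
      simp only [l, K] at this
      rw [show m - (m - i) = i by omega,
        show m + (k + 1) - (m - i) = i + (m + (k + 1)) - m by omega,
        show m + (k + 1) - (m - i + (k + 1)) = i by omega] at this
      push_cast at this
      omega
    · intro h i hi
      have := h (m - i) (by omega) (by omega)
      simp only [l, K]
      rw [show m - i + (m + (k + 1)) - m = m + (k + 1) - i by omega] at this
      rw [show m + (k + 1) - (i + (k + 1)) = m - i by omega]
      push_cast
      omega
  · ext i j
    have hi := i.2
    have hj := j.2
    have hu : uent lam mu ((Fin.rev i : ℕ) + 1) ((Fin.rev j : ℕ) + 1) =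
        lam (m + (k + 1) - i) - mu (m + (k + 1) - j) + (i : ℕ) - (j : ℕ) := by
      simp only [uent, Fin.val_rev]
      rw [show m + (k + 1) - (i.1 + 1) + 1 = m + (k + 1) - i by omega,
        show m + (k + 1) - (j.1 + 1) + 1 = m + (k + 1) - j by omega]
      omega
    have hr : (Fin.rev j : ℕ) = m + (k + 1) - (j.1 + 1) := Fin.val_rev j
    simp only [Matrix.submatrix_apply, Matrix.of_apply, Fin.revPerm_apply, ent, l, K]
    generalize uent lam mu ((Fin.rev i : ℕ) + 1) ((Fin.rev j : ℕ) + 1) = u at hu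
    rw [hr, show m + (k + 1) - m - 1 = k by omega,
      show m + (k + 1) - 1 - (m + (k + 1) - (j.1 + 1)) = j by omega]
    by_cases h : j.1 < k + 1
    · rw [if_neg (by omega), if_pos h, hu, hmu_zero _ (by omega)]
      congr 1
      push_cast
      ring
    · rw [if_pos (by omega), if_neg h, show m - (j.1 - (k + 1)) = m + (k + 1) - j by omega]
      simp only [ftr]
      generalize lam (m + (k + 1) - i) = a at hu
      generalize mu (m + (k + 1) - j) = b at hu
      split_ifs with h1 h2 h2
      · congr 2
        omega
      · omega
      · rw [Nat.choose_eq_zero_of_lt (by omega)]; simp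
      · rfl
end
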